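/- Let N be a nilpotent endomorphism of a finite-dimensional complex vector space V. Then there exists a unique increasing filtration (W_k)_{k∈ℤ} of V by subspaces (with W_k = 0 for k ≪ 0 and W_k = V for k ≫ 0) such that N(W_k) ⊆ W_{k-2} for all k, and such that for every k ≥ 0 the induced map N^k : Gr^W_k → Gr^W_{-k} between the graded quotients Gr^W_k = W_k / W_{k-1} is an isomorphism. -/

import Mathlib

/-- `W` is a weight filtration for `N`: an increasing filtration, trivial for `k ≪ 0`,
full for `k ≫ 0`, with `N (W_k) ⊆ W_{k-2}`, such that for each `k ≥ 0` the map induced by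
`N^k` on graded quotients `Gr^W_k = W_k / W_{k-1} → Gr^W_{-k} = W_{-k} / W_{-k-1}` is an
isomorphism (injectivity and surjectivity of the induced map are spelled out
elementwise). -/
def IsWeightFiltration {V : Type*} [AddCommGroup V] [Module ℂ V]
    (N : Module.End ℂ V) (W : ℤ → Submodule ℂ V) : Prop :=
  Monotone W ∧
  (∃ k₀ : ℤ, ∀ k ≤ k₀, W k = ⊥) ∧
  (∃ k₁ : ℤ, ∀ k ≥ k₁, W k = ⊤) ∧
  (∀ k : ℤ, ∀ x ∈ W k, N x ∈ W (k - 2)) ∧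
  (∀ k : ℕ,
    (∀ x ∈ W (k : ℤ), (N ^ k) x ∈ W (-(k : ℤ) - 1) → x ∈ W ((k : ℤ) - 1)) ∧
    (∀ y ∈ W (-(k : ℤ)), ∃ x ∈ W (k : ℤ), y - (N ^ k) x ∈ W (-(k : ℤ) - 1)))

/-!
Put `W_k = ∑ N^j (ker N^m)`, the sum being over `m ≤ 2 j + k + 1`. Then `N W_k ⊆ W_{k-2}`,
`ker N^(k+1) ⊆ W_k` and `W_{-k} = N^k W_k`. These three facts give the isomorphisms on graded
quotients: if `N^k x ∈ W_{-k-1}`, write `N^k x = N^(k+1) z` with `z ∈ W_{k+1}`; then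
`x - N z ∈ ker N^k ⊆ W_{k-1}` and `N z ∈ W_{k-1}`.

Conversely, they hold for every filtration `W` as in the theorem. Given a second one `W'`, the same
decomposition of `x ∈ W_k`, now with `N^(k+1) x = N^(k+2) z` and `z ∈ W_{k+2}`, proves
`W_k ⊆ W'_k` for `k ≥ 0` by descending induction on `k`, and applying `N^k` proves
`W_{-k} ⊆ W'_{-k}`. Exchanging `W` and `W'` gives equality.
-/

section Module

variable {R M : Type*} [Ring R] [AddCommGroup M] [Module R M]

/-- The weight filtrations of an endomorphism of a module over an arbitrary ring, with the
isomorphisms on graded quotients spelled out elementwise as in `IsWeightFiltration`. -/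
structure IsMonodromyFiltration (N : Module.End R M) (W : ℤ → Submodule R M) : Prop where
  monotone : Monotone W
  exists_eq_bot : ∃ k₀ : ℤ, ∀ k ≤ k₀, W k = ⊥
  exists_eq_top : ∃ k₁ : ℤ, ∀ k ≥ k₁, W k = ⊤
  apply_mem : ∀ k, ∀ x ∈ W k, N x ∈ W (k - 2)
  mem_of_pow_apply_mem : ∀ k : ℕ, ∀ x ∈ W k, (N ^ k) x ∈ W (-k - 1) → x ∈ W (k - 1)
  exists_sub_pow_apply_mem : ∀ k : ℕ, ∀ y ∈ W (-k), ∃ x ∈ W k, y - (N ^ k) x ∈ W (-k - 1)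

/-- The explicit weight filtration `W_k = ∑_j N^j (ker N^(2j+k+1))` of an endomorphism. Summing over
all `m ≤ 2j+k+1` instead leaves the sum unchanged and drops the terms with `2j+k+1 < 0`. -/
def monodromyFiltration (N : Module.End R M) (k : ℤ) : Submodule R M :=
  ⨆ (j : ℕ) (m : ℕ) (_ : (m : ℤ) ≤ 2 * j + k + 1), (LinearMap.ker (N ^ m)).map (N ^ j)

variable {N : Module.End R M}

theorem mem_of_pow_apply_eq_pow_succ_apply {P : Submodule R M} {k : ℕ} {x z : M}
    (hker : LinearMap.ker (N ^ k) ≤ P) (hNz : N z ∈ P) (h : (N ^ k) x = (N ^ (k + 1)) z) :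
    x ∈ P := by
  have hsub : x - N z ∈ P := hker <| by
    rw [LinearMap.mem_ker, map_sub, h, pow_succ, Module.End.mul_apply, sub_self]
  simpa using add_mem hsub hNz

theorem monodromyFiltration_le_iff {k : ℤ} {P : Submodule R M} :
    monodromyFiltration N k ≤ P ↔
      ∀ j m : ℕ, (m : ℤ) ≤ 2 * j + k + 1 → ∀ x, (N ^ m) x = 0 → (N ^ j) x ∈ P := by
  simp only [monodromyFiltration, iSup_le_iff, Submodule.map_le_iff_le_comap]
  rfl

theorem pow_apply_mem_monodromyFiltration {k : ℤ} {j m : ℕ} (h : (m : ℤ) ≤ 2 * j + k + 1) {x : M}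
    (hx : (N ^ m) x = 0) : (N ^ j) x ∈ monodromyFiltration N k :=
  monodromyFiltration_le_iff.1 le_rfl j m h x hx

theorem ker_pow_le_monodromyFiltration {k : ℤ} {m : ℕ} (h : (m : ℤ) ≤ k + 1) :
    LinearMap.ker (N ^ m) ≤ monodromyFiltration N k := fun _ hx ↦
  pow_apply_mem_monodromyFiltration (j := 0) (by simpa using h) hx

theorem monodromyFiltration_mono : Monotone (monodromyFiltration N) := fun _ _ hkl ↦
  monodromyFiltration_le_iff.2 fun _ _ h _ ↦ pow_apply_mem_monodromyFiltration (by lia)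

theorem apply_mem_monodromyFiltration {k : ℤ} {x : M} (hx : x ∈ monodromyFiltration N k) :
    N x ∈ monodromyFiltration N (k - 2) := by
  suffices monodromyFiltration N k ≤ (monodromyFiltration N (k - 2)).comap N from this hx
  refine monodromyFiltration_le_iff.2 fun j m h y hy ↦ ?_
  rw [Submodule.mem_comap, ← Module.End.mul_apply, ← pow_succ']
  exact pow_apply_mem_monodromyFiltration (by lia) hy

theorem monodromyFiltration_neg_le_map_pow (k : ℕ) :
    monodromyFiltration N (-k) ≤ (monodromyFiltration N k).map (N ^ k) := by
  refine monodromyFiltration_le_iff.2 fun j m h x hx ↦ ?_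
  obtain hkj | hjk := le_or_gt k j
  · refine ⟨(N ^ (j - k)) x, pow_apply_mem_monodromyFiltration (by lia) hx, ?_⟩
    rw [← Module.End.mul_apply, ← pow_add, Nat.add_sub_cancel' hkj]
  · rw [Module.End.pow_map_zero_of_le (by lia) hx]
    exact zero_mem _

theorem monodromyFiltration_eq_bot {n : ℕ} (hn : N ^ n = 0) {k : ℤ} (hk : k ≤ -n) :
    monodromyFiltration N k = ⊥ := by
  refine eq_bot_iff.2 (monodromyFiltration_le_iff.2 fun j m h x hx ↦ ?_)
  rw [Submodule.mem_bot]
  obtain hnj | hjn := le_or_gt n j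
  · rw [pow_eq_zero_of_le hnj hn, LinearMap.zero_apply]
  · exact Module.End.pow_map_zero_of_le (by lia) hx

theorem monodromyFiltration_eq_top {n : ℕ} (hn : N ^ n = 0) {k : ℤ} (hk : n ≤ k + 1) :
    monodromyFiltration N k = ⊤ :=
  top_unique <| by simpa [hn] using ker_pow_le_monodromyFiltration (N := N) hk

theorem mem_monodromyFiltration_of_pow_apply_mem {k : ℕ} {x : M}
    (hx : (N ^ k) x ∈ monodromyFiltration N (-k - 1)) : x ∈ monodromyFiltration N (k - 1) := by
  have hx' : (N ^ k) x ∈ monodromyFiltration N (-(k + 1 : ℕ)) :=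
    monodromyFiltration_mono (by lia) hx
  obtain ⟨z, hz, hzx⟩ := monodromyFiltration_neg_le_map_pow (k + 1) hx'
  have hNz : N z ∈ monodromyFiltration N (k - 1) :=
    monodromyFiltration_mono (by lia) (apply_mem_monodromyFiltration hz)
  exact mem_of_pow_apply_eq_pow_succ_apply (ker_pow_le_monodromyFiltration (by lia)) hNz hzx.symm

theorem isMonodromyFiltration_monodromyFiltration (hN : IsNilpotent N) :
    IsMonodromyFiltration N (monodromyFiltration N) where
  monotone := monodromyFiltration_mono
  exists_eq_bot := hN.imp' (fun n : ℕ ↦ -(n : ℤ)) fun _ hn _ ↦ monodromyFiltration_eq_bot hn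
  exists_eq_top := hN.imp' (fun n : ℕ ↦ (n : ℤ)) fun _ hn _ hk ↦
    monodromyFiltration_eq_top hn (by lia)
  apply_mem _ _ := apply_mem_monodromyFiltration
  mem_of_pow_apply_mem _ _ _ := mem_monodromyFiltration_of_pow_apply_mem
  exists_sub_pow_apply_mem k y hy := by
    obtain ⟨x, hx, rfl⟩ := monodromyFiltration_neg_le_map_pow k hy
    exact ⟨x, hx, by simp⟩

namespace IsMonodromyFiltration

variable {W W' : ℤ → Submodule R M}

theorem pow_apply_mem (hW : IsMonodromyFiltration N W) {k : ℤ} (j : ℕ) {x : M} (hx : x ∈ W k) :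
    (N ^ j) x ∈ W (k - 2 * j) := by
  induction j with
  | zero => simpa using hx
  | succ j ih =>
    rw [pow_succ', Module.End.mul_apply]
    exact hW.monotone (by lia) (hW.apply_mem _ _ ih)

theorem isNilpotent (hW : IsMonodromyFiltration N W) : IsNilpotent N := by
  obtain ⟨k₀, hk₀⟩ := hW.exists_eq_bot
  obtain ⟨k₁, hk₁⟩ := hW.exists_eq_top
  refine ⟨(k₁ - k₀).toNat, LinearMap.ext fun x ↦ ?_⟩
  have hx : x ∈ W k₁ := by simp [hk₁ k₁ le_rfl]
  have hNx := hW.pow_apply_mem (k₁ - k₀).toNat hx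
  rwa [hk₀ _ (by lia), Submodule.mem_bot] at hNx

theorem ker_pow_succ_le (hW : IsMonodromyFiltration N W) (k : ℕ) :
    LinearMap.ker (N ^ (k + 1)) ≤ W k := by
  obtain ⟨k₁, hk₁⟩ := hW.exists_eq_top
  obtain ⟨d, hd⟩ : ∃ d : ℕ, k₁ ≤ k + d := ⟨(k₁ - k).toNat, by lia⟩
  induction d generalizing k with
  | zero => simp [hk₁ k (by simpa using hd)]
  | succ d ih =>
    intro x hx
    have hx' : x ∈ W (k + 1 : ℕ) :=
      ih (k + 1) (by lia) (Module.End.pow_map_zero_of_le (Nat.le_succ _) hx)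
    simpa using hW.mem_of_pow_apply_mem (k + 1) x hx' (by simp [LinearMap.mem_ker.1 hx])

theorem neg_le_map_pow (hW : IsMonodromyFiltration N W) (k : ℕ) : W (-k) ≤ (W k).map (N ^ k) := by
  obtain ⟨k₀, hk₀⟩ := hW.exists_eq_bot
  obtain ⟨d, hd⟩ : ∃ d : ℕ, -k - d ≤ k₀ := ⟨(-k - k₀).toNat, by lia⟩
  induction d generalizing k with
  | zero => simp [hk₀ (-k) (by simpa using hd)]
  | succ d ih =>
    intro y hy
    obtain ⟨x, hx, hr⟩ := hW.exists_sub_pow_apply_mem k y hy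
    obtain ⟨z, hz, hzr⟩ := ih (k + 1) (by lia) (hW.monotone (by lia) hr)
    have hNz : N z ∈ W k := hW.monotone (by lia) (hW.apply_mem _ z hz)
    refine ⟨x + N z, add_mem hx hNz, ?_⟩
    rw [map_add, ← Module.End.mul_apply, ← pow_succ, hzr, add_sub_cancel]

theorem natCast_le (hW : IsMonodromyFiltration N W) (hW' : IsMonodromyFiltration N W') (k : ℕ) :
    W k ≤ W' k := by
  obtain ⟨k₁, hk₁⟩ := hW'.exists_eq_top
  obtain ⟨d, hd⟩ : ∃ d : ℕ, k₁ ≤ k + d := ⟨(k₁ - k).toNat, by lia⟩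
  induction d generalizing k with
  | zero => simp [hk₁ k (by simpa using hd)]
  | succ d ih =>
    intro x hx
    have hNx : (N ^ (k + 1)) x ∈ W (-(k + 2 : ℕ)) :=
      hW.monotone (by lia) (hW.pow_apply_mem (k + 1) hx)
    obtain ⟨z, hz, hzx⟩ := hW.neg_le_map_pow (k + 2) hNx
    have hNz : N z ∈ W' k :=
      hW'.monotone (by lia) (hW'.apply_mem _ z (ih (k + 2) (by lia) hz))
    exact mem_of_pow_apply_eq_pow_succ_apply (hW'.ker_pow_succ_le k) hNz hzx.symm

theorem le (hW : IsMonodromyFiltration N W) (hW' : IsMonodromyFiltration N W') : W ≤ W' := by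
  intro k
  obtain ⟨k, rfl | rfl⟩ := k.eq_nat_or_neg
  · exact hW.natCast_le hW' k
  · intro y hy
    obtain ⟨x, hx, rfl⟩ := hW.neg_le_map_pow k hy
    exact hW'.monotone (by lia) (hW'.pow_apply_mem k (hW.natCast_le hW' k hx))

theorem unique (hW : IsMonodromyFiltration N W) (hW' : IsMonodromyFiltration N W') : W = W' :=
  (hW.le hW').antisymm (hW'.le hW)

end IsMonodromyFiltration

theorem stmt3_general (N : Module.End R M) :
    (∃! W : ℤ → Submodule R M, IsMonodromyFiltration N W) ↔ IsNilpotent N :=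
  ⟨fun h ↦ h.exists.elim fun _ hW ↦ hW.isNilpotent, fun hN ↦
    have hW := isMonodromyFiltration_monodromyFiltration hN
    ⟨monodromyFiltration N, hW, fun _ hW' ↦ hW'.unique hW⟩⟩

end Module

theorem isWeightFiltration_iff_isMonodromyFiltration {V : Type*} [AddCommGroup V] [Module ℂ V]
    {N : Module.End ℂ V} {W : ℤ → Submodule ℂ V} :
    IsWeightFiltration N W ↔ IsMonodromyFiltration N W :=
  ⟨fun ⟨hmono, hbot, htop, hN, hgr⟩ ↦
    ⟨hmono, hbot, htop, hN, fun k ↦ (hgr k).1, fun k ↦ (hgr k).2⟩,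
    fun ⟨hmono, hbot, htop, hN, hinj, hsurj⟩ ↦
      ⟨hmono, hbot, htop, hN, fun k ↦ ⟨hinj k, hsurj k⟩⟩⟩

/-- Every nilpotent endomorphism of a finite-dimensional complex vector space admits a
unique weight filtration. -/
theorem stmt3 {V : Type*} [AddCommGroup V] [Module ℂ V] [FiniteDimensional ℂ V]
    (N : Module.End ℂ V) (hN : IsNilpotent N) :
    ∃! W : ℤ → Submodule ℂ V, IsWeightFiltration N W := by
  simpa only [isWeightFiltration_iff_isMonodromyFiltration] using (stmt3_general N).2 hN
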